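/- Let K be an imaginary quadratic number field (a number field of degree 2 over ℚ with no real embeddings) with odd class number, and suppose K contains no element x with x² = -1 and no element x with x² = -2 (i.e. K is not ℚ(i) and not ℚ(√-2)). Then the prime 2 is unramified in K/ℚ; equivalently, there is no ideal 𝔮 of the ring of integers 𝓞_K with 𝔮² = (2), the principal ideal generated by 2. -/

import Mathlib

open NumberField

/-!
By odd class number, an ideal whose square is `(n)` is principal, so `n` is a unit times a square.
The units of an imaginary quadratic field are roots of unity, and when `-1` is not a square every
root of unity is a square up to sign. Hence `n` or `-n` is a square in `K`; the former makes the
natural number `n` itself a square, because a square root of `n` is a real element of `K` and is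
therefore rational.
-/

theorem isSquare_or_isSquare_neg_of_isOfFinOrder {R : Type*} [Ring R] [NoZeroDivisors R]
    (hi : ¬IsSquare (-1 : R)) {u : R} (hu : IsOfFinOrder u) : IsSquare u ∨ IsSquare (-u) := by
  rcases Nat.even_or_odd' (orderOf u) with ⟨k, heven | hodd⟩
  · have hk : u ^ k = -1 := by
      have hsq : u ^ k * u ^ k = 1 := by rw [← pow_add, ← two_mul, ← heven, pow_orderOf_eq_one]
      have hpos : 0 < orderOf u := hu.orderOf_pos
      have hne : u ^ k ≠ 1 := pow_ne_one_of_lt_orderOf (by lia) (by lia)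
      exact (mul_self_eq_one_iff.1 hsq).resolve_left hne
    have hkodd : Odd k := Nat.not_even_iff_odd.1 fun hkeven => hi (hk ▸ hkeven.isSquare_pow u)
    right
    rw [neg_eq_neg_one_mul, ← hk, ← pow_succ]
    exact hkodd.add_one.isSquare_pow u
  · left
    rw [← one_mul u, ← pow_orderOf_eq_one u, ← pow_succ, hodd]
    exact (odd_two_mul_add_one k).add_one.isSquare_pow u

theorem star_eq_self_of_mul_self_eq_ofReal {z : ℂ} {r : ℝ} (hr : 0 ≤ r) (hz : z * z = r) :
    star z = z := by
  have hsqrt : z * z = √r * √r := by rw [hz, ← Complex.ofReal_mul, Real.mul_self_sqrt hr]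
  rcases mul_self_eq_mul_self_iff.1 hsqrt with rfl | rfl <;> simp

theorem exists_associated_sq_of_ideal_sq_eq_span_singleton {R : Type*} [CommRing R]
    [IsDedekindDomain R] [Fintype (ClassGroup R)] (hodd : Odd (Fintype.card (ClassGroup R)))
    {𝔮 : Ideal R} {x : R} (h : 𝔮 ^ 2 = Ideal.span {x}) : ∃ a : R, Associated (a ^ 2) x := by
  have hprincipal : (𝔮 ^ 2).IsPrincipal := h ▸ ⟨x, rfl⟩
  obtain ⟨a, rfl⟩ := Ideal.IsPrincipal.of_isPrincipal_pow_of_coprime hodd.coprime_two_left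
    hprincipal
  refine ⟨a, ?_⟩
  rwa [Ideal.submodule_span_eq, Ideal.span_singleton_pow,
    Ideal.span_singleton_eq_span_singleton] at h

theorem mem_maximalRealSubfield_of_mul_self_eq_ratCast {K : Type*} [Field K] {x : K} {r : ℚ}
    (hr : 0 ≤ r) (hx : x * x = r) : x ∈ maximalRealSubfield K := by
  rw [mem_maximalRealSubfield_iff]
  intro φ
  have hφx : φ x * φ x = (r : ℝ) := by rw [← map_mul, hx, map_ratCast, Complex.ofReal_ratCast]
  exact star_eq_self_of_mul_self_eq_ofReal (mod_cast hr) hφx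

theorem isTotallyComplex_of_isEmpty_ringHom_real {K : Type*} [Field K] (h : IsEmpty (K →+* ℝ)) :
    IsTotallyComplex K where
  isComplex _ := InfinitePlace.not_isReal_iff_isComplex.1 fun hreal =>
    h.false (InfinitePlace.embedding_of_isReal hreal)

theorem isOfFinOrder_unit_of_rank_eq_zero {K : Type*} [Field K] [NumberField K]
    (hrank : Units.rank K = 0) (u : (𝓞 K)ˣ) : IsOfFinOrder u := by
  have : IsEmpty (Fin (Units.rank K)) := hrank ▸ Fin.isEmpty
  have htop : Units.torsion K = ⊤ := by
    simpa only [Set.range_eq_empty, Subgroup.closure_empty, bot_sup_eq] using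
      Units.closure_fundSystem_sup_torsion_eq_top K
  have hu : u ∈ Units.torsion K := htop ▸ Subgroup.mem_top u
  exact (CommGroup.mem_torsion u).1 hu

section ImaginaryQuadratic

variable {K : Type*} [Field K] [NumberField K] [Algebra.IsQuadraticExtension ℚ K]
  [IsTotallyComplex K]

theorem units_rank_eq_zero_of_imaginary_quadratic : Units.rank K = 0 := by
  have hdeg : 2 = 2 * InfinitePlace.nrComplexPlaces K :=
    (Algebra.IsQuadraticExtension.finrank_eq_two ℚ K).symm.trans (IsTotallyComplex.finrank K)
  rw [Units.rank, InfinitePlace.card_eq_nrRealPlaces_add_nrComplexPlaces,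
    IsTotallyComplex.nrRealPlaces_eq_zero]
  lia

theorem isSquare_of_isSquare_ratCast {r : ℚ} (hr : 0 ≤ r) (h : IsSquare (r : K)) :
    IsSquare r := by
  obtain ⟨x, hx⟩ := h
  have hreal : x ∈ maximalRealSubfield K :=
    mem_maximalRealSubfield_of_mul_self_eq_ratCast hr hx.symm
  obtain ⟨q, hq⟩ : ∃ q : ℚ, (q : K) = x :=
    ⟨_, CMExtension.algebraMap_equivMaximalRealSubfield_symm_apply ℚ K ⟨x, hreal⟩⟩
  refine ⟨q, ?_⟩
  rw [← hq] at hx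
  exact_mod_cast hx

theorem isSquare_or_isSquare_neg_of_ideal_sq_eq_span_singleton (hodd : Odd (classNumber K))
    (hi : ¬IsSquare (-1 : 𝓞 K)) {𝔮 : Ideal (𝓞 K)} {x : 𝓞 K} (h : 𝔮 ^ 2 = Ideal.span {x}) :
    IsSquare x ∨ IsSquare (-x) := by
  obtain ⟨a, u, rfl⟩ := exists_associated_sq_of_ideal_sq_eq_span_singleton hodd h
  have hu : IsOfFinOrder (u : 𝓞 K) := Units.isOfFinOrder_val.2
    (isOfFinOrder_unit_of_rank_eq_zero units_rank_eq_zero_of_imaginary_quadratic u)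
  rw [← mul_neg]
  exact (isSquare_or_isSquare_neg_of_isOfFinOrder hi hu).imp (IsSquare.sq a).mul (IsSquare.sq a).mul

end ImaginaryQuadratic

theorem two_unramified_of_imaginary_quadratic_oddClassNumber_general
    (K : Type*) [Field K] [NumberField K]
    (hdeg : Module.finrank ℚ K = 2) (himag : IsEmpty (K →+* ℝ))
    (hodd : Odd (classNumber K)) (hi : ¬∃ x : K, x ^ 2 = -1)
    {n : ℕ} (hn : ¬IsSquare n) (hneg : ¬∃ x : K, x ^ 2 = -n) :
    ¬∃ 𝔮 : Ideal (𝓞 K), 𝔮 ^ 2 = Ideal.span {(n : 𝓞 K)} := by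
  rintro ⟨𝔮, h𝔮⟩
  have : Algebra.IsQuadraticExtension ℚ K := ⟨hdeg⟩
  have : IsTotallyComplex K := isTotallyComplex_of_isEmpty_ringHom_real himag
  have hi' : ¬IsSquare (-1 : 𝓞 K) := fun ⟨x, hx⟩ =>
    hi ⟨x, by rw [sq, ← map_mul, ← hx, map_neg, map_one]⟩
  rcases isSquare_or_isSquare_neg_of_ideal_sq_eq_span_singleton hodd hi' h𝔮 with hpos | ⟨x, hx⟩
  · have hK : IsSquare ((n : ℚ) : K) := by simpa using hpos.map (algebraMap (𝓞 K) K)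
    exact hn (Rat.isSquare_natCast_iff.1 (isSquare_of_isSquare_ratCast n.cast_nonneg hK))
  · exact hneg ⟨x, by rw [sq, ← map_mul, ← hx, map_neg, map_natCast]⟩

/-- In an imaginary quadratic number field with odd class number, other than
`ℚ(i)` and `ℚ(√-2)`, the prime 2 is unramified: no ideal of the ring of integers
squares to the principal ideal `(2)`. -/
theorem two_unramified_of_imaginary_quadratic_oddClassNumber
    (K : Type*) [Field K] [NumberField K]
    (hdeg : Module.finrank ℚ K = 2) (himag : IsEmpty (K →+* ℝ))
    (hodd : Odd (NumberField.classNumber K))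
    (hi : ¬∃ x : K, x ^ 2 = -1) (h2 : ¬∃ x : K, x ^ 2 = -2) :
    ¬∃ 𝔮 : Ideal (𝓞 K), 𝔮 ^ 2 = Ideal.span {(2 : 𝓞 K)} :=
  two_unramified_of_imaginary_quadratic_oddClassNumber_general K hdeg himag hodd hi
    (n := 2) Nat.prime_two.not_isSquare h2
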